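/- Pr(L_n^□ ≤ l) = ∏_{i,j=1}^n (1 - a_i b_j) · Σ_{μ : μ_1 ≤ l} s_μ(a_1,…,a_n) s_μ(b_1,…,b_n), where L_n^□ is the last passage time in the Johansson model with geometric weights. In particular (l = ∞), the Cauchy identity ∏_{i,j}(1-a_i b_j)^{-1} = Σ_μ s_μ(a) s_μ(b) normalizes the measure, so the restriction defines a probability. -/

import Mathlib

open Finset

/-- The complete homogeneous symmetric polynomial `h_k` in `n` variables, evaluated at `x`. -/
def hpoly {R : Type*} [CommRing R] (n k : ℕ) (x : Fin n → R) : R :=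
  ∑ d ∈ Finset.Nat.antidiagonalTuple n k, ∏ i, x i ^ d i

/-- `h_k` extended to integer index: zero for negative `k`. -/
def hpolyZ {R : Type*} [CommRing R] (n : ℕ) (k : ℤ) (x : Fin n → R) : R :=
  if 0 ≤ k then hpoly n k.toNat x else 0

/-- The Schur polynomial `s_μ(x_1,…,x_n)` of a partition `μ` with at most `n` parts,
via the Jacobi–Trudi determinant `det[h_{μ_i - i + j}]_{i,j=1..n}`. -/
def schur {R : Type*} [CommRing R] (n : ℕ) (μ : Fin n → ℕ) (x : Fin n → R) : R :=
  Matrix.det (Matrix.of fun i j : Fin n =>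
    hpolyZ n ((μ i : ℤ) - ((i : ℕ) : ℤ) + ((j : ℕ) : ℤ)) x)

/-- Number of `true`s among the first `k` entries of `d`. -/
def trueCount {m : ℕ} (d : Fin m → Bool) (k : ℕ) : ℕ :=
  ((Finset.univ : Finset (Fin m)).filter (fun i : Fin m => i.1 < k ∧ d i = true)).card

/-- The cell of the lattice `{1,…,n}²` visited after `k` steps of the up/right path with
step directions `d` (`true` = up), starting at the corner `(1,1)` (`0`-based here). -/
def pathCell (n : ℕ) (hn : 0 < n) (d : Fin (2 * (n - 1)) → Bool) (k : ℕ) : Fin n × Fin n :=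
  (⟨min (trueCount d k) (n - 1), by omega⟩, ⟨min (k - trueCount d k) (n - 1), by omega⟩)

/-- The last passage time `L_n^□`: the maximum, over all up/right lattice paths from `(1,1)`
to `(n,n)`, of the sum of the matrix entries along the path. -/
def lastPassage (n : ℕ) (hn : 0 < n) (x : Fin n → Fin n → ℕ) : ℕ :=
  (((Finset.univ : Finset (Fin (2 * (n - 1)) → Bool)).filter
      (fun d => ((Finset.univ : Finset (Fin (2 * (n - 1)))).filter
        (fun i => d i = true)).card = n - 1)).sup
    (fun d => ∑ k ∈ Finset.range (2 * n - 1),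
      x (pathCell n hn d k).1 (pathCell n hn d k).2))

theorem hpoly_zero_left {R : Type*} [CommRing R] (k : ℕ) (x : Fin 0 → R) :
    hpoly 0 k x = if k = 0 then 1 else 0 := by
  unfold hpoly
  cases k with
  | zero => simp
  | succ k => simp

theorem hpoly_succ_left {R : Type*} [CommRing R] (n k : ℕ) (x : Fin (n + 1) → R) :
    hpoly (n + 1) k x =
      ∑ p ∈ antidiagonal k, x 0 ^ p.1 * hpoly n p.2 (fun i => x i.succ) := by
  unfold hpoly
  simp_rw [Finset.mul_sum]
  rw [Finset.sum_sigma']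
  refine Finset.sum_nbij' (fun d => ⟨(d 0, ∑ i : Fin n, d i.succ), fun i => d i.succ⟩)
    (fun s => Fin.cons s.1.1 s.2) ?_ ?_ ?_ ?_ ?_
  · intro d hd
    simpa [Finset.Nat.mem_antidiagonalTuple, Fin.sum_univ_succ] using hd
  · rintro ⟨⟨i, j⟩, d⟩ hd
    simp only [mem_sigma, HasAntidiagonal.mem_antidiagonal, Finset.Nat.mem_antidiagonalTuple] at hd
    simp [Finset.Nat.mem_antidiagonalTuple, Fin.sum_univ_succ, hd.2, hd.1]
  · intro d hd
    ext i
    refine Fin.cases ?_ ?_ i <;> simp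
  · rintro ⟨⟨i, j⟩, d⟩ hd
    simp only [mem_sigma, HasAntidiagonal.mem_antidiagonal, Finset.Nat.mem_antidiagonalTuple] at hd
    obtain ⟨h1, h2⟩ := hd
    subst h2
    simp
  · intro d hd
    simp [Fin.prod_univ_succ]

theorem hpolyZ_of_neg {R : Type*} [CommRing R] (n : ℕ) (k : ℤ) (hk : k < 0) (x : Fin n → R) :
    hpolyZ n k x = 0 := by
  simp [hpolyZ, not_le.mpr hk]

theorem hpolyZ_natCast {R : Type*} [CommRing R] (n k : ℕ) (x : Fin n → R) :
    hpolyZ n (k : ℤ) x = hpoly n k x := by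
  simp [hpolyZ]

theorem hpolyZ_zero_left {R : Type*} [CommRing R] (k : ℤ) (x : Fin 0 → R) :
    hpolyZ 0 k x = if k = 0 then 1 else 0 := by
  rcases lt_or_ge k 0 with hk | hk
  · rw [hpolyZ_of_neg _ _ hk, if_neg hk.ne]
  · lift k to ℕ using hk
    simp [hpolyZ_natCast, hpoly_zero_left]

theorem hpolyZ_succ_left {R : Type*} [CommRing R] (n : ℕ) (k : ℤ) (x : Fin (n + 1) → R) :
    hpolyZ (n + 1) k x =
      x 0 * hpolyZ (n + 1) (k - 1) x + hpolyZ n k (fun i => x i.succ) := by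
  rcases lt_or_ge k 0 with hk | hk
  · rw [hpolyZ_of_neg _ _ hk, hpolyZ_of_neg _ _ hk, hpolyZ_of_neg _ _ (by omega)]
    simp
  · lift k to ℕ using hk
    cases k with
    | zero =>
      rw [hpolyZ_of_neg (n + 1) (((0 : ℕ) : ℤ) - 1) (by simp),
        hpolyZ_natCast, hpolyZ_natCast, hpoly_succ_left]
      simp
    | succ k =>
      have : ((k + 1 : ℕ) : ℤ) - 1 = (k : ℕ) := by push_cast; ring
      rw [this]
      simp only [hpolyZ_natCast]
      rw [hpoly_succ_left, hpoly_succ_left, Finset.Nat.antidiagonal_succ]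
      simp only [sum_cons, sum_map, Function.Embedding.prodMap, Finset.mul_sum]
      simp [pow_succ']
      rw [add_comm]
      congr 1
      refine Finset.sum_congr rfl fun p _ => by ring

/-- The coefficients of `∏ (1 - x_i z)` invert the generating series of the `h_k`. -/
theorem exists_coeff_sum_hpolyZ_eq {R : Type*} [CommRing R] (n : ℕ) (x : Fin n → R) :
    ∃ c : ℕ → R, c 0 = 1 ∧ ∀ m : ℤ,
      ∑ k ∈ range (n + 1), c k * hpolyZ n (m - k) x = if m = 0 then 1 else 0 := by
  induction n with
  | zero => exact ⟨fun _ => 1, rfl, fun m => by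
      simp only [zero_add, Finset.sum_range_one, hpolyZ_zero_left]
      simp⟩
  | succ n ih =>
    obtain ⟨c, h0, hc⟩ := ih (fun i => x i.succ)
    refine ⟨fun k => (if k < n + 1 then c k else 0) - x 0 * (if k = 0 then 0 else c (k - 1)),
      by simp [h0], fun m => ?_⟩
    rw [← hc m]
    simp only [sub_mul, Finset.sum_sub_distrib]
    rw [Finset.sum_range_succ, Finset.sum_range_succ' _ (n + 1)]
    simp only [lt_irrefl, if_false, zero_mul, add_zero, if_true, mul_zero, Nat.add_eq_zero_iff,
      one_ne_zero, and_false, Nat.add_sub_cancel]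
    rw [← Finset.sum_sub_distrib]
    refine Finset.sum_congr rfl fun k hk => ?_
    rw [if_pos (Finset.mem_range.1 hk), hpolyZ_succ_left n (m - k)]
    push_cast
    rw [show m - ((k : ℤ) + 1) = m - k - 1 by ring]
    ring

theorem exists_coeff_sum_hpolyZ_succ_eq {R : Type*} [CommRing R] (n : ℕ) (x : Fin (n + 1) → R) :
    ∃ c : ℕ → R, c 0 = 1 ∧ ∀ m : ℕ,
      ∑ k ∈ range (n + 1), c k * hpolyZ (n + 1) (m - k) x = x 0 ^ m := by
  obtain ⟨c, h0, hc⟩ := exists_coeff_sum_hpolyZ_eq n (fun i => x i.succ)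
  refine ⟨c, h0, fun m => ?_⟩
  have key : ∀ m : ℤ, ∑ k ∈ range (n + 1), c k * hpolyZ (n + 1) (m - k) x =
      x 0 * ∑ k ∈ range (n + 1), c k * hpolyZ (n + 1) (m - 1 - k) x +
        if m = 0 then 1 else 0 := by
    intro m
    rw [← hc m, Finset.mul_sum, ← Finset.sum_add_distrib]
    refine Finset.sum_congr rfl fun k _ => ?_
    rw [hpolyZ_succ_left n (m - k), show m - 1 - (k : ℤ) = m - k - 1 by ring]
    ring
  induction m with
  | zero =>
    rw [key, Finset.sum_eq_zero]
    · simp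
    · intro k _
      rw [hpolyZ_of_neg _ _ (by push_cast; omega), mul_zero]
  | succ m ih =>
    rw [key, show ((m + 1 : ℕ) : ℤ) - 1 = m by push_cast; ring, ih, if_neg (by omega)]
    ring

theorem sum_Icc_pow_mul_hpolyZ {R : Type*} [CommRing R] (n u v : ℕ) (huv : u ≤ v) (c : ℤ)
    (x : Fin (n + 1) → R) :
    ∑ r ∈ Icc u v, x 0 ^ (v - r) * hpolyZ n (r + c) (fun i => x i.succ) =
      hpolyZ (n + 1) (v + c) x - x 0 ^ (v - u + 1) * hpolyZ (n + 1) (u - 1 + c) x := by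
  induction v, huv using Nat.le_induction with
  | base =>
    rw [hpolyZ_succ_left n (u + c), show (u : ℤ) + c - 1 = u - 1 + c by ring]
    simp
  | succ v huv ih =>
    rw [Finset.sum_Icc_succ_top (by omega)]
    have : ∀ r ∈ Icc u v, x 0 ^ (v + 1 - r) * hpolyZ n (r + c) (fun i => x i.succ) =
        x 0 * (x 0 ^ (v - r) * hpolyZ n (r + c) (fun i => x i.succ)) := by
      intro r hr
      rw [Nat.succ_sub (Finset.mem_Icc.1 hr).2, pow_succ]
      ring
    rw [Finset.sum_congr rfl this, ← Finset.mul_sum, ih, hpolyZ_succ_left n ((v + 1 : ℕ) + c),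
      show ((v + 1 : ℕ) : ℤ) + c - 1 = v + c by push_cast; ring, Nat.succ_sub huv, pow_succ]
    simp
    ring

/-- Row `i + 1` may be used to modify row `i`. -/
theorem Matrix.det_eq_of_forall_row_eq_smul_add_succ {R : Type*} [CommRing R] {n : ℕ}
    {A B : Matrix (Fin (n + 1)) (Fin (n + 1)) R} (c : Fin n → R)
    (A_last : ∀ j, A (Fin.last n) j = B (Fin.last n) j)
    (A_castSucc : ∀ (i : Fin n) (j), A i.castSucc j = B i.castSucc j + c i * A i.succ j) :
    A.det = B.det := by
  rw [← Matrix.det_submatrix_equiv_self Fin.revPerm A,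
    ← Matrix.det_submatrix_equiv_self Fin.revPerm B]
  refine Matrix.det_eq_of_forall_row_eq_smul_add_pred (fun i => c i.rev) ?_ ?_
  · intro j
    simp [A_last]
  · intro i j
    simp [Fin.rev_succ, Fin.rev_castSucc, A_castSucc]

/-- The branching rule for Schur polynomials. -/
theorem schur_succ {R : Type*} [CommRing R] (n : ℕ) (μ : Fin (n + 1) → ℕ)
    (hμ : ∀ i : Fin n, μ i.succ ≤ μ i.castSucc) (x : Fin (n + 1) → R) :
    schur (n + 1) μ x =
      ∑ ν ∈ Fintype.piFinset (fun i : Fin n => Icc (μ i.succ) (μ i.castSucc)),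
        x 0 ^ (∑ i, (μ i.castSucc - ν i) + μ (Fin.last n)) *
          schur n ν (fun i => x i.succ) := by
  obtain ⟨c, h0, hc⟩ := exists_coeff_sum_hpolyZ_succ_eq n x
  set M : Matrix (Fin (n + 1)) (Fin (n + 1)) R := Matrix.of fun i j =>
    hpolyZ (n + 1) ((μ i : ℤ) - ((i : ℕ) : ℤ) + ((j : ℕ) : ℤ)) x with hM
  have hS : schur (n + 1) μ x = M.det := rfl
  have hcol : M.det = (M.updateCol (Fin.last n)
      (fun i => x 0 ^ (μ i + n - i))).det := by
    have h := Matrix.det_updateCol_sum M (Fin.last n) (fun j => c (n - j))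
    simp only [Fin.val_last, Nat.sub_self, h0, one_smul] at h
    rw [← h]
    congr 2
    ext i
    rw [← hc, ← Finset.sum_range_reflect, Finset.sum_range]
    refine Finset.sum_congr rfl fun j _ => ?_
    have hi := i.is_le
    have hj := j.is_le
    simp only [hM, Matrix.of_apply, smul_eq_mul]
    rw [show n + 1 - 1 - (j : ℕ) = n - j by omega]
    congr 2
    push_cast [Nat.cast_sub hj, Nat.cast_sub (show (i : ℕ) ≤ μ i + n by omega)]
    ring
  set B : Matrix (Fin (n + 1)) (Fin (n + 1)) R := Matrix.of fun i j =>
    Fin.lastCases (motive := fun _ => R)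
      ((M.updateCol (Fin.last n) (fun i => x 0 ^ (μ i + n - i))) (Fin.last n) j)
      (fun i : Fin n => Fin.lastCases (motive := fun _ => R) 0
        (fun j : Fin n => ∑ r ∈ Icc (μ i.succ) (μ i.castSucc),
          x 0 ^ (μ i.castSucc - r) * hpolyZ n ((r : ℤ) + (((j : ℕ) : ℤ) - ((i : ℕ) : ℤ)))
            (fun i => x i.succ)) j) i with hB
  have hrow : (M.updateCol (Fin.last n) (fun i => x 0 ^ (μ i + n - i))).det = B.det := by
    refine Matrix.det_eq_of_forall_row_eq_smul_add_succ
      (fun i => x 0 ^ (μ i.castSucc - μ i.succ + 1)) ?_ ?_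
    · intro j
      simp [hB]
    · intro i j
      refine Fin.lastCases ?_ (fun j => ?_) j
      · have := hμ i
        have := i.2
        simp only [hB, Matrix.of_apply, Fin.lastCases_castSucc, Fin.lastCases_last, zero_add,
          Matrix.updateCol_self, ← pow_add]
        congr 1
        simp
        omega
      · simp only [hB, Matrix.of_apply, Fin.lastCases_castSucc]
        rw [sum_Icc_pow_mul_hpolyZ _ _ _ (hμ i)]
        simp only [ne_eq, Fin.castSucc_ne_last, not_false_eq_true, Matrix.updateCol_ne, hM,
          Matrix.of_apply]
        rw [show (μ i.castSucc : ℤ) - ((i.castSucc : Fin (n + 1)) : ℕ) +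
            ((j.castSucc : Fin (n + 1)) : ℕ) =
            μ i.castSucc + ((j : ℕ) - (i : ℕ)) by simp; ring,
          show (μ i.succ : ℤ) - ((i.succ : Fin (n + 1)) : ℕ) +
            ((j.castSucc : Fin (n + 1)) : ℕ) =
            μ i.succ - 1 + ((j : ℕ) - (i : ℕ)) by simp; ring]
        ring
  rw [hS, hcol, hrow, Matrix.det_succ_column B (Fin.last n), Fin.sum_univ_castSucc,
    Finset.sum_eq_zero, zero_add]
  swap
  · intro i _
    simp [hB]
  have hlast : B (Fin.last n) (Fin.last n) = x 0 ^ μ (Fin.last n) := by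
    simp [hB]
  rw [hlast, Even.neg_one_pow (by simp), one_mul]
  have hsub : B.submatrix (Fin.last n).succAbove (Fin.last n).succAbove =
      fun (i : Fin n) => ∑ r ∈ Icc (μ i.succ) (μ i.castSucc), fun (j : Fin n) =>
        x 0 ^ (μ i.castSucc - r) * hpolyZ n ((r : ℤ) - ((i : ℕ) : ℤ) + ((j : ℕ) : ℤ))
            (fun k => x k.succ) := by
    ext i j
    simp only [Matrix.submatrix_apply, Fin.succAbove_last, hB, Matrix.of_apply,
      Fin.lastCases_castSucc, Finset.sum_apply]
    refine Finset.sum_congr rfl fun r _ => ?_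
    congr 2
    ring
  rw [hsub]
  have hsum := (Matrix.detRowAlternating (n := Fin n) (R := R)).toMultilinearMap.map_sum_finset
    (fun (i : Fin n) r => (fun j => x 0 ^ (μ i.castSucc - r) *
      hpolyZ n ((r : ℤ) - ((i : ℕ) : ℤ) + ((j : ℕ) : ℤ)) (fun i => x i.succ) : Fin n → R))
    (fun i => Icc (μ i.succ) (μ i.castSucc))
  refine (congrArg (x 0 ^ μ (Fin.last n) * ·) hsum).trans ?_
  rw [Finset.mul_sum]
  refine Finset.sum_congr rfl fun ν _ => ?_
  have hmul := Matrix.det_mul_column (fun i : Fin n => x 0 ^ (μ i.castSucc - ν i))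
    (Matrix.of fun i j : Fin n =>
      hpolyZ n ((ν i : ℤ) - ((i : ℕ) : ℤ) + ((j : ℕ) : ℤ)) (fun i => x i.succ))
  refine (congrArg (x 0 ^ μ (Fin.last n) * ·) hmul).trans ?_
  rw [Finset.prod_pow_eq_pow_sum, pow_add, schur]
  ring

open scoped ENNReal

/-- The sum of the entries of a finitely supported sequence. -/
noncomputable def seqSize (f : ℕ → ℕ) : ℕ := ∑ᶠ i, f i

theorem seqSize_eq_sum_range {f : ℕ → ℕ} {N : ℕ} (h : ∀ i, N ≤ i → f i = 0) :
    seqSize f = ∑ i ∈ range N, f i := by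
  refine finsum_eq_sum_of_support_subset _ fun i hi => ?_
  simp only [coe_range, Set.mem_Iio]
  by_contra hc
  exact hi (h i (not_lt.1 hc))

/-- `Interlace κ ρ` says that `ρ / κ` is a horizontal strip and `ρ` is finitely supported. -/
def Interlace (κ ρ : ℕ → ℕ) : Prop :=
  (∀ i, κ i ≤ ρ i ∧ ρ (i + 1) ≤ κ i) ∧ ∃ N, ∀ i, N ≤ i → ρ i = 0

theorem interlace_zero_right {κ : ℕ → ℕ} : Interlace κ 0 ↔ κ = 0 := by
  constructor
  · intro h
    funext i
    exact Nat.le_zero.1 (h.1 i).1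
  · rintro rfl
    exact ⟨fun i => by simp, 0, fun i _ => rfl⟩

theorem Interlace.seqSize_le {κ ρ : ℕ → ℕ} (h : Interlace κ ρ) : seqSize κ ≤ seqSize ρ := by
  obtain ⟨h, N, hN⟩ := h
  rw [seqSize_eq_sum_range hN, seqSize_eq_sum_range (N := N)
    fun i hi => Nat.le_zero.1 ((h i).1.trans (hN i hi).le)]
  exact Finset.sum_le_sum fun i _ => (h i).1

/-- The local rule of the Robinson–Schensted–Knuth growth diagram. -/
def localRule (κ ν ρ : ℕ → ℕ) (x : ℕ) : ℕ → ℕ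
  | 0 => max (ν 0) (ρ 0) + x
  | i + 1 => max (ν (i + 1)) (ρ (i + 1)) + (min (ν i) (ρ i) - κ i)

theorem localRule_comm (κ ν ρ : ℕ → ℕ) (x : ℕ) : localRule κ ν ρ x = localRule κ ρ ν x := by
  funext i
  cases i <;> simp [localRule, max_comm, min_comm]

theorem Interlace.localRule {κ ν ρ : ℕ → ℕ} (hν : Interlace κ ν) (hρ : Interlace κ ρ) (x : ℕ) :
    Interlace ν (localRule κ ν ρ x) := by
  obtain ⟨h, N, hN⟩ := hν
  obtain ⟨h', N', hN'⟩ := hρ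
  refine ⟨fun i => ⟨?_, ?_⟩, N + N' + 1, fun i hi => ?_⟩
  · cases i with
    | zero => simp only [_root_.localRule]; omega
    | succ i => simp only [_root_.localRule]; omega
  · have := h i
    have := h' i
    simp only [_root_.localRule]
    omega
  · obtain ⟨j, rfl⟩ : ∃ j, i = j + 1 := ⟨i - 1, by omega⟩
    simp only [_root_.localRule]
    rw [hN _ (by omega), hN' _ (by omega), hN j (by omega)]
    simp

theorem seqSize_localRule {κ ν ρ : ℕ → ℕ} (hν : Interlace κ ν) (hρ : Interlace κ ρ) (x : ℕ) :
    seqSize (localRule κ ν ρ x) + seqSize κ = seqSize ν + seqSize ρ + x := by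
  obtain ⟨N₁, h₁⟩ := (hν.localRule hρ x).2
  obtain ⟨h, N₂, h₂⟩ := hν
  obtain ⟨h', N₃, h₃⟩ := hρ
  have hN : ∀ {f : ℕ → ℕ} {M : ℕ}, M ≤ N₁ + N₂ + N₃ → (∀ i, M ≤ i → f i = 0) →
      seqSize f = ∑ i ∈ range (N₁ + N₂ + N₃ + 1), f i :=
    fun hM hf => seqSize_eq_sum_range fun i hi => hf i (by omega)
  rw [hN (by omega) h₁, hN (by omega) h₂, hN (by omega) h₃,
    hN (f := κ) (M := N₂) (by omega) fun i hi => Nat.le_zero.1 ((h i).1.trans (h₂ i hi).le)]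
  have key : ∀ n, ∑ i ∈ range (n + 1), localRule κ ν ρ x i + ∑ i ∈ range (n + 1), κ i +
      (min (ν n) (ρ n) - κ n) =
      ∑ i ∈ range (n + 1), ν i + ∑ i ∈ range (n + 1), ρ i + x := by
    intro n
    induction n with
    | zero =>
      have := h 0
      have := h' 0
      simp only [zero_add, sum_range_one, localRule]
      omega
    | succ n ih =>
      have := h (n + 1)
      have := h' (n + 1)
      rw [sum_range_succ _ (n + 1), sum_range_succ κ (n + 1), sum_range_succ ν (n + 1),
        sum_range_succ ρ (n + 1)]
      rw [show localRule κ ν ρ x (n + 1) =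
        max (ν (n + 1)) (ρ (n + 1)) + (min (ν n) (ρ n) - κ n) from rfl]
      omega
  have := key (N₁ + N₂ + N₃)
  rw [h₂ (N₁ + N₂ + N₃) (by omega)] at this
  simpa using this

/-- Inverse of the local rule, for the smaller shape. -/
theorem exists_localRule_eq {ν ρ σ : ℕ → ℕ} (hν : Interlace ν σ) (hρ : Interlace ρ σ) :
    ∃ κ x, Interlace κ ν ∧ Interlace κ ρ ∧ localRule κ ν ρ x = σ := by
  obtain ⟨h, N, hN⟩ := hν
  obtain ⟨h', -⟩ := hρ
  refine ⟨fun i => max (ν (i + 1)) (ρ (i + 1)) + min (ν i) (ρ i) - σ (i + 1),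
    σ 0 - max (ν 0) (ρ 0), ⟨fun i => ?_, N, fun i hi => ?_⟩, ⟨fun i => ?_, N, fun i hi => ?_⟩, ?_⟩
  · have := h i
    have := h' i
    have := h (i + 1)
    have := h' (i + 1)
    simp only
    omega
  · have := (h i).1
    have := hN i hi
    omega
  · have := h i
    have := h' i
    have := h (i + 1)
    have := h' (i + 1)
    simp only
    omega
  · have := (h' i).1
    have := hN i hi
    omega
  · funext i
    cases i with
    | zero =>
      have := h 0
      have := h' 0
      simp only [localRule]
      omega
    | succ i =>
      have := h i
      have := h' i
      have := h (i + 1)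
      have := h' (i + 1)
      simp only [localRule]
      omega

theorem localRule_injective {κ κ' ν ρ : ℕ → ℕ} {x x' : ℕ} (hν : Interlace κ ν)
    (hρ : Interlace κ ρ) (hν' : Interlace κ' ν) (hρ' : Interlace κ' ρ)
    (h : localRule κ ν ρ x = localRule κ' ν ρ x') : κ = κ' ∧ x = x' := by
  constructor
  · funext i
    have h1 := congrFun h (i + 1)
    have := hν.1 i
    have := hρ.1 i
    have := hν'.1 i
    have := hρ'.1 i
    simp only [localRule] at h1
    omega
  · have h0 := congrFun h 0
    simp only [localRule] at h0
    omega

open Classical in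
/-- The one-variable skew Schur function `s_{ρ/κ}(t)`. -/
noncomputable def stripWeight (t : ℝ≥0∞) (κ ρ : ℕ → ℕ) : ℝ≥0∞ :=
  if Interlace κ ρ then t ^ (seqSize ρ - seqSize κ) else 0

theorem interlace_of_stripWeight_ne_zero {t : ℝ≥0∞} {κ ρ : ℕ → ℕ}
    (h : stripWeight t κ ρ ≠ 0) : Interlace κ ρ := by
  by_contra hc
  exact h (if_neg hc)

open Classical in
theorem stripWeight_zero_right (t : ℝ≥0∞) (κ : ℕ → ℕ) :
    stripWeight t κ 0 = if κ = 0 then 1 else 0 := by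
  unfold stripWeight
  simp only [interlace_zero_right]
  split_ifs with h
  · simp [h]
  · rfl

/-- The local form of the skew Cauchy identity, refined by the local rule. -/
theorem tsum_localRule (s t : ℝ≥0∞) (ν ρ : ℕ → ℕ) (F : (ℕ → ℕ) → ℝ≥0∞) :
    ∑' κ, stripWeight t κ ρ *
        ∑' x, stripWeight s κ ν * ((s * t) ^ x * F (localRule κ ν ρ x)) =
      ∑' σ, stripWeight s ρ σ * (stripWeight t ν σ * F σ) := by
  simp_rw [← ENNReal.tsum_mul_left]
  rw [← ENNReal.tsum_prod (f := fun κ x => stripWeight t κ ρ *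
    (stripWeight s κ ν * ((s * t) ^ x * F (localRule κ ν ρ x))))]
  have hsupp : ∀ p : Function.support (fun p : (ℕ → ℕ) × ℕ => stripWeight t p.1 ρ *
      (stripWeight s p.1 ν * ((s * t) ^ p.2 * F (localRule p.1 ν ρ p.2)))),
      Interlace p.1.1 ρ ∧ Interlace p.1.1 ν := by
    rintro ⟨p, hp⟩
    rw [Function.mem_support] at hp
    exact ⟨interlace_of_stripWeight_ne_zero (left_ne_zero_of_mul hp),
      interlace_of_stripWeight_ne_zero (left_ne_zero_of_mul (right_ne_zero_of_mul hp))⟩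
  have hval : ∀ κ x, Interlace κ ρ → Interlace κ ν →
      stripWeight s ρ (localRule κ ν ρ x) *
        (stripWeight t ν (localRule κ ν ρ x) * F (localRule κ ν ρ x)) =
      stripWeight t κ ρ * (stripWeight s κ ν * ((s * t) ^ x * F (localRule κ ν ρ x))) := by
    intro κ x hρ hν
    have hσν := hν.localRule hρ x
    have hσρ := hρ.localRule hν x
    rw [localRule_comm] at hσρ
    have hsz := seqSize_localRule hν hρ x
    have h1 := hν.seqSize_le
    have h2 := hρ.seqSize_le
    simp only [stripWeight, if_pos hσν, if_pos hσρ, if_pos hν, if_pos hρ]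
    rw [show seqSize (localRule κ ν ρ x) - seqSize ρ = (seqSize ν - seqSize κ) + x by omega,
      show seqSize (localRule κ ν ρ x) - seqSize ν = (seqSize ρ - seqSize κ) + x by omega]
    ring
  symm
  refine tsum_eq_tsum_of_ne_zero_bij (fun p => localRule p.1.1 ν ρ p.1.2) ?_ ?_ ?_
  · intro p q hpq
    obtain ⟨h1, h2⟩ := localRule_injective (hsupp p).2 (hsupp p).1 (hsupp q).2 (hsupp q).1 hpq
    exact Subtype.ext (Prod.ext h1 h2)
  · intro σ hσ
    rw [Function.mem_support] at hσ
    have h1 := interlace_of_stripWeight_ne_zero (left_ne_zero_of_mul hσ)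
    have h2 := interlace_of_stripWeight_ne_zero (left_ne_zero_of_mul (right_ne_zero_of_mul hσ))
    obtain ⟨κ, x, hν, hρ, rfl⟩ := exists_localRule_eq h2 h1
    rw [hval κ x hρ hν] at hσ
    exact ⟨⟨(κ, x), hσ⟩, rfl⟩
  · intro p
    exact hval _ _ (hsupp p).1 (hsupp p).2

theorem tsum_fin_succ {α : Type*} {m : ℕ} (F : (Fin (m + 1) → α) → ℝ≥0∞) :
    ∑' c, F c = ∑' y : α, ∑' c : Fin m → α, F (Fin.cons y c) := by
  rw [← ENNReal.tsum_prod (f := fun (y : α) (c : Fin m → α) => F (Fin.cons y c))]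
  exact ((Fin.consEquiv fun _ => α).tsum_eq F).symm

/-- The largest shape of a chain of shapes. -/
def topShape : {m : ℕ} → (Fin m → ℕ → ℕ) → ℕ → ℕ
  | 0, _ => 0
  | _ + 1, c => c 0

@[simp]
theorem topShape_cons {m : ℕ} (ν : ℕ → ℕ) (c : Fin m → ℕ → ℕ) :
    topShape (Fin.cons ν c : Fin (m + 1) → ℕ → ℕ) = ν := rfl

/-- One step of the growth diagram: a chain of shapes is updated by a column of entries. -/
def growthStep : {m : ℕ} → (Fin m → ℕ → ℕ) → (Fin m → ℕ) → Fin m → ℕ → ℕ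
  | 0, c, _ => c
  | _ + 1, c, x =>
    Fin.cons
      (localRule (topShape fun i => c i.succ) (c 0)
        (topShape (growthStep (fun i => c i.succ) fun i => x i.succ)) (x 0))
      (growthStep (fun i => c i.succ) fun i => x i.succ)

/-- The weight of the semistandard tableau encoded by a chain of shapes. -/
noncomputable def chainWeight : {m : ℕ} → (Fin m → ℝ≥0∞) → (Fin m → ℕ → ℕ) → ℝ≥0∞
  | 0, _, _ => 1
  | _ + 1, a, c => stripWeight (a 0) (topShape fun i => c i.succ) (c 0) *
      chainWeight (fun i => a i.succ) fun i => c i.succ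

theorem tsum_growthStep {m : ℕ} (a : Fin m → ℝ≥0∞) (t : ℝ≥0∞)
    (H : (ℕ → ℕ) → (Fin m → ℕ → ℕ) → ℝ≥0∞) :
    ∑' c, chainWeight a c * ∑' x, (∏ i, (a i * t) ^ x i) * H (topShape c) (growthStep c x) =
      ∑' r, chainWeight a r * ∑' κ, stripWeight t κ (topShape r) * H κ r := by
  induction m with
  | zero =>
    refine tsum_congr fun c => ?_
    congr 1
    rw [tsum_eq_single (default : Fin 0 → ℕ) (fun x hx => absurd (Subsingleton.elim _ _) hx),
      tsum_eq_single (0 : ℕ → ℕ)]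
    · simp [topShape, growthStep, stripWeight_zero_right]
    · intro κ hκ
      simp [topShape, stripWeight_zero_right, hκ]
  | succ m ih =>
    rw [tsum_fin_succ, tsum_fin_succ]
    have hν : ∀ ν, ∑' c : Fin m → ℕ → ℕ, chainWeight a (Fin.cons ν c) *
          ∑' x, (∏ i, (a i * t) ^ x i) * H (topShape (Fin.cons ν c : Fin (m + 1) → ℕ → ℕ))
            (growthStep (Fin.cons ν c) x) =
        ∑' r : Fin m → ℕ → ℕ, chainWeight (fun i => a i.succ) r *
          ∑' σ, stripWeight (a 0) (topShape r) σ *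
            (stripWeight t ν σ * H ν (Fin.cons σ r)) := by
      intro ν
      simp_rw [← tsum_localRule]
      rw [← ih]
      refine tsum_congr fun c => ?_
      simp only [chainWeight, Fin.cons_succ, Fin.cons_zero, topShape_cons]
      rw [mul_comm (stripWeight _ _ _), mul_assoc]
      congr 1
      rw [tsum_fin_succ, ENNReal.tsum_comm, ← ENNReal.tsum_mul_left]
      refine tsum_congr fun x => ?_
      rw [← ENNReal.tsum_mul_left, ← ENNReal.tsum_mul_left]
      refine tsum_congr fun y => ?_
      simp only [Fin.prod_univ_succ, Fin.cons_succ, Fin.cons_zero, growthStep]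
      ring
    rw [tsum_congr hν, ENNReal.tsum_comm]
    conv_rhs => rw [ENNReal.tsum_comm]
    refine tsum_congr fun r => ?_
    simp only [chainWeight, Fin.cons_succ, Fin.cons_zero, topShape_cons, ENNReal.tsum_mul_left]
    simp_rw [← ENNReal.tsum_mul_left]
    rw [ENNReal.tsum_comm]
    refine tsum_congr fun σ => tsum_congr fun κ => ?_
    ring

open Classical in
/-- The Schur function of a sequence, defined by the branching rule. -/
noncomputable def schurWeight : {m : ℕ} → (Fin m → ℝ≥0∞) → (ℕ → ℕ) → ℝ≥0∞
  | 0, _, μ => if μ = 0 then 1 else 0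
  | _ + 1, a, μ => ∑' κ, stripWeight (a 0) κ μ * schurWeight (fun i => a i.succ) κ

theorem tsum_chainWeight_mul {m : ℕ} (a : Fin m → ℝ≥0∞) (F : (ℕ → ℕ) → ℝ≥0∞) :
    ∑' c, chainWeight a c * F (topShape c) = ∑' μ, schurWeight a μ * F μ := by
  induction m generalizing F with
  | zero =>
    rw [tsum_eq_single (default : Fin 0 → ℕ → ℕ) (fun x hx => absurd (Subsingleton.elim _ _) hx),
      tsum_eq_single (0 : ℕ → ℕ)]
    · simp [topShape, chainWeight, schurWeight]
    · intro κ hκ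
      simp [schurWeight, hκ]
  | succ m ih =>
    rw [tsum_fin_succ]
    refine tsum_congr fun μ => ?_
    simp only [chainWeight, Fin.cons_succ, Fin.cons_zero, topShape_cons, schurWeight,
      ← ENNReal.tsum_mul_right]
    rw [tsum_congr fun κ => show stripWeight (a 0) κ μ * schurWeight (fun i => a i.succ) κ * F μ =
      schurWeight (fun i => a i.succ) κ * (stripWeight (a 0) κ μ * F μ) by ring,
      ← ih (fun i => a i.succ) (fun κ => stripWeight (a 0) κ μ * F μ)]
    refine tsum_congr fun c => ?_
    ring

open Classical in
theorem tsum_chainWeight_mul_ite {m : ℕ} (a : Fin m → ℝ≥0∞) (G : (Fin m → ℕ → ℕ) → ℝ≥0∞) :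
    ∑' c, chainWeight a c * ((if topShape c = 0 then 1 else 0) * G c) = G 0 := by
  induction m with
  | zero =>
    rw [tsum_eq_single (default : Fin 0 → ℕ → ℕ) (fun x hx => absurd (Subsingleton.elim _ _) hx)]
    simp only [topShape, chainWeight, if_true, one_mul]
    exact congrArg G (Subsingleton.elim _ _)
  | succ m ih =>
    rw [tsum_fin_succ, tsum_eq_single (0 : ℕ → ℕ)]
    · have : (0 : Fin (m + 1) → ℕ → ℕ) = Fin.cons 0 0 := by
        funext i
        refine Fin.cases ?_ ?_ i <;> simp
      rw [this, ← ih (fun i => a i.succ) (fun c => G (Fin.cons 0 c))]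
      refine tsum_congr fun c => ?_
      simp only [chainWeight, topShape_cons, Fin.cons_succ, Fin.cons_zero, stripWeight_zero_right,
        if_true]
      ring
    · intro μ hμ
      simp [topShape, hμ]

/-- The shapes on the final edge of the growth diagram of a matrix. -/
def growth : {k m : ℕ} → (Fin k → Fin m → ℕ) → Fin m → ℕ → ℕ
  | 0, _, _ => 0
  | _ + 1, _, y => growthStep (growth fun j => y j.succ) (y 0)

theorem tsum_growth {k m : ℕ} (a : Fin m → ℝ≥0∞) (b : Fin k → ℝ≥0∞)
    (G : (Fin m → ℕ → ℕ) → ℝ≥0∞) :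
    ∑' y : Fin k → Fin m → ℕ, (∏ j, ∏ i, (a i * b j) ^ y j i) * G (growth y) =
      ∑' c, chainWeight a c * (schurWeight b (topShape c) * G c) := by
  induction k generalizing G with
  | zero =>
    rw [tsum_eq_single (default : Fin 0 → Fin m → ℕ)
      (fun x hx => absurd (Subsingleton.elim _ _) hx)]
    simp only [schurWeight]
    rw [tsum_chainWeight_mul_ite]
    simp [growth]
  | succ k ih =>
    rw [tsum_fin_succ, ENNReal.tsum_comm]
    have h := ih (fun j => b j.succ)
      (fun c => ∑' x : Fin m → ℕ, (∏ i, (a i * b 0) ^ x i) * G (growthStep c x))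
    have h2 := tsum_growthStep a (b 0) (fun κ r => schurWeight (fun j => b j.succ) κ * G r)
    have h3 : ∀ c : Fin m → ℕ → ℕ, chainWeight a c *
        (schurWeight (fun j => b j.succ) (topShape c) *
          ∑' x : Fin m → ℕ, (∏ i, (a i * b 0) ^ x i) * G (growthStep c x)) =
        chainWeight a c * ∑' x : Fin m → ℕ, (∏ i, (a i * b 0) ^ x i) *
          (schurWeight (fun j => b j.succ) (topShape c) * G (growthStep c x)) := by
      intro c
      rw [← ENNReal.tsum_mul_left (a := schurWeight _ _)]
      congr 1
      refine tsum_congr fun x => ?_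
      ring
    rw [tsum_congr h3, h2] at h
    refine Eq.trans (tsum_congr fun y => ?_) (h.trans (tsum_congr fun c => ?_))
    · rw [← ENNReal.tsum_mul_left]
      refine tsum_congr fun x => ?_
      simp only [Fin.prod_univ_succ, Fin.cons_succ, Fin.cons_zero, growth]
      ring
    · simp only [schurWeight, ← ENNReal.tsum_mul_right]
      congr 1
      refine tsum_congr fun κ => ?_
      ring

theorem tsum_topShape_growth {k m : ℕ} (a : Fin m → ℝ≥0∞) (b : Fin k → ℝ≥0∞)
    (F : (ℕ → ℕ) → ℝ≥0∞) :
    ∑' y : Fin k → Fin m → ℕ, (∏ j, ∏ i, (a i * b j) ^ y j i) * F (topShape (growth y)) =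
      ∑' μ, schurWeight a μ * (schurWeight b μ * F μ) := by
  rw [tsum_growth a b (fun c => F (topShape c)),
    ← tsum_chainWeight_mul a (fun μ => schurWeight b μ * F μ)]

/-- The last passage time from the corner `(0, 0)` to the opposite corner of the rectangle
`{0,…,k-1} × {0,…,m-1}`, by dynamic programming. -/
def rectPassage : ℕ → ℕ → (ℕ → ℕ → ℕ) → ℕ
  | 0, _, _ => 0
  | _ + 1, 0, _ => 0
  | k + 1, m + 1, Y =>
    max (rectPassage k (m + 1) fun i j => Y (i + 1) j)
      (rectPassage (k + 1) m fun i j => Y i (j + 1)) + Y 0 0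

theorem rectPassage_zero_right (k : ℕ) (Y : ℕ → ℕ → ℕ) : rectPassage k 0 Y = 0 := by
  cases k <;> simp [rectPassage]

theorem growth_succ_tail {k m : ℕ} (y : Fin k → Fin (m + 1) → ℕ) :
    (fun i => growth y (Fin.succ i)) = growth fun j i => y j i.succ := by
  induction k with
  | zero => rfl
  | succ k ih =>
    simp only [growth, growthStep, Fin.cons_succ]
    rw [ih]

theorem topShape_growth_apply_zero {k m : ℕ} (y : Fin k → Fin m → ℕ) (Y : ℕ → ℕ → ℕ)
    (hY : ∀ (j : Fin k) (i : Fin m), Y j i = y j i) :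
    topShape (growth y) 0 = rectPassage k m Y := by
  induction k generalizing m Y with
  | zero => cases m <;> simp [growth, topShape, rectPassage]
  | succ k ihk =>
    induction m generalizing Y with
    | zero => simp [topShape, rectPassage]
    | succ m ihm =>
      have h1 := ihk (fun j => y j.succ) (fun i j => Y (i + 1) j) fun j i => by
        simp [← hY]
      have h2 := ihm (fun j i => y j i.succ) (fun i j => Y i (j + 1)) fun j i => by
        simp [← hY]
      rw [rectPassage, ← h1, ← h2, show Y 0 0 = y 0 0 from hY 0 0]
      simp only [growth, growthStep, topShape_cons, localRule]
      rw [growth_succ_tail]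
      rfl

/-- The last passage time from the cell `(p, q)` to `(n - 1, n - 1)`. -/
def passageFrom (n : ℕ) (Y : ℕ → ℕ → ℕ) (p q : ℕ) : ℕ :=
  rectPassage (n - p) (n - q) fun i j => Y (p + i) (q + j)

theorem passageFrom_of_le_left {n p : ℕ} (Y : ℕ → ℕ → ℕ) (q : ℕ) (hp : n ≤ p) :
    passageFrom n Y p q = 0 := by
  simp [passageFrom, Nat.sub_eq_zero_of_le hp, rectPassage]

theorem passageFrom_of_le_right {n q : ℕ} (Y : ℕ → ℕ → ℕ) (p : ℕ) (hq : n ≤ q) :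
    passageFrom n Y p q = 0 := by
  simp [passageFrom, Nat.sub_eq_zero_of_le hq, rectPassage_zero_right]

theorem passageFrom_eq {n p q : ℕ} (Y : ℕ → ℕ → ℕ) (hp : p < n) (hq : q < n) :
    passageFrom n Y p q =
      max (passageFrom n Y (p + 1) q) (passageFrom n Y p (q + 1)) + Y p q := by
  unfold passageFrom
  obtain ⟨k, rfl⟩ : ∃ k, n = p + k + 1 := ⟨n - p - 1, by omega⟩
  obtain ⟨m, hm⟩ : ∃ m, p + k + 1 - q = m + 1 := ⟨p + k + 1 - q - 1, by omega⟩
  rw [hm, show p + k + 1 - p = k + 1 by omega, show p + k + 1 - (p + 1) = k by omega,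
    show p + k + 1 - (q + 1) = m by omega, rectPassage]
  simp only [add_zero]
  congr 4 <;> (funext i j; congr 1; ring)

theorem trueCount_zero {m : ℕ} (d : Fin m → Bool) : trueCount d 0 = 0 := by
  simp [trueCount]

theorem trueCount_succ {m : ℕ} (d : Fin m → Bool) (s : ℕ) :
    trueCount d (s + 1) = trueCount d s + if ∃ h : s < m, d ⟨s, h⟩ = true then 1 else 0 := by
  unfold trueCount
  split_ifs with h
  · obtain ⟨h, hd⟩ := h
    rw [← Finset.card_insert_of_notMem (a := (⟨s, h⟩ : Fin m)) (by simp)]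
    congr 1
    ext i
    simp only [mem_filter, mem_univ, true_and, mem_insert, Fin.ext_iff]
    constructor
    · rintro ⟨h1, h2⟩
      rcases Nat.lt_succ_iff_lt_or_eq.1 h1 with h3 | h3
      · exact Or.inr ⟨h3, h2⟩
      · exact Or.inl h3
    · rintro (h1 | ⟨h1, h2⟩)
      · refine ⟨by omega, ?_⟩
        rw [← hd]
        exact congrArg d (Fin.ext h1)
      · exact ⟨by omega, h2⟩
  · rw [add_zero]
    congr 1
    ext i
    simp only [mem_filter, mem_univ, true_and]
    refine ⟨fun ⟨h1, h2⟩ => ⟨?_, h2⟩, fun ⟨h1, h2⟩ => ⟨by omega, h2⟩⟩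
    rcases Nat.lt_succ_iff_lt_or_eq.1 h1 with h3 | h3
    · exact h3
    · exact absurd ⟨h3 ▸ i.2, by rw [← h2]; exact congrArg d (Fin.ext h3.symm)⟩ h

theorem trueCount_add_le {m : ℕ} (d : Fin m → Bool) (s t : ℕ) :
    trueCount d (s + t) ≤ trueCount d s + t := by
  induction t with
  | zero => simp
  | succ t ih =>
    rw [← add_assoc, trueCount_succ]
    split_ifs <;> omega

theorem trueCount_mono {m : ℕ} (d : Fin m → Bool) : Monotone (trueCount d) :=
  monotone_nat_of_le_succ fun s => by rw [trueCount_succ]; omega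

theorem trueCount_self {m : ℕ} (d : Fin m → Bool) :
    trueCount d m = ((univ : Finset (Fin m)).filter fun i => d i = true).card := by
  simp [trueCount]

theorem trueCount_bounds {N : ℕ} (d : Fin (2 * N) → Bool) (hd : trueCount d (2 * N) = N) {s : ℕ}
    (hs : s ≤ 2 * N) : trueCount d s ≤ N ∧ s - trueCount d s ≤ N := by
  have h1 := trueCount_mono d hs
  have h2 := trueCount_add_le d s (2 * N - s)
  rw [show s + (2 * N - s) = 2 * N by omega] at h2
  omega

theorem sum_path_le_passageFrom (N : ℕ) (Y : ℕ → ℕ → ℕ) (d : Fin (2 * N) → Bool)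
    (hd : trueCount d (2 * N) = N) (t : ℕ) (ht : t ≤ 2 * N + 1) :
    ∑ s ∈ Ico (2 * N + 1 - t) (2 * N + 1), Y (trueCount d s) (s - trueCount d s) ≤
      passageFrom (N + 1) Y (trueCount d (2 * N + 1 - t))
        (2 * N + 1 - t - trueCount d (2 * N + 1 - t)) := by
  induction t with
  | zero => simp
  | succ t ih =>
    specialize ih (by omega)
    obtain ⟨s, hs⟩ : ∃ s, 2 * N + 1 - t = s + 1 := ⟨2 * N - t, by omega⟩
    rw [show 2 * N + 1 - (t + 1) = s by omega, Finset.sum_eq_sum_Ico_succ_bot (by omega)]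
    rw [hs] at ih
    obtain ⟨h1, h2⟩ := trueCount_bounds d hd (s := s) (by omega)
    have h3 := trueCount_add_le d 0 s
    rw [trueCount_zero, zero_add] at h3
    rw [passageFrom_eq Y (by omega) (by omega), add_comm (Y _ _)]
    refine Nat.add_le_add_right (ih.trans ?_) _
    rw [trueCount_succ]
    split_ifs
    · rw [show s + 1 - (trueCount d s + 1) = s - trueCount d s by omega]
      exact le_max_left _ _
    · rw [add_zero, show s + 1 - trueCount d s = s - trueCount d s + 1 by omega]
      exact le_max_right _ _

/-- The first coordinate of a geodesic. -/
def geodesic (N : ℕ) (Y : ℕ → ℕ → ℕ) : ℕ → ℕ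
  | 0 => 0
  | s + 1 =>
    if geodesic N Y s < N ∧ (N ≤ s - geodesic N Y s ∨
        passageFrom (N + 1) Y (geodesic N Y s) (s - geodesic N Y s + 1) ≤
          passageFrom (N + 1) Y (geodesic N Y s + 1) (s - geodesic N Y s))
    then geodesic N Y s + 1 else geodesic N Y s

theorem geodesic_bounds (N : ℕ) (Y : ℕ → ℕ → ℕ) {s : ℕ} (hs : s ≤ 2 * N) :
    geodesic N Y s ≤ N ∧ geodesic N Y s ≤ s ∧ s - geodesic N Y s ≤ N := by
  induction s with
  | zero => simp [geodesic]
  | succ s ih =>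
    specialize ih (by omega)
    rw [geodesic]
    split_ifs with h
    · omega
    · rw [not_and_or, not_or] at h
      omega

theorem passageFrom_geodesic_le_sum (N : ℕ) (Y : ℕ → ℕ → ℕ) (t : ℕ) (ht : t ≤ 2 * N) :
    passageFrom (N + 1) Y (geodesic N Y (2 * N - t)) (2 * N - t - geodesic N Y (2 * N - t)) ≤
      ∑ s ∈ Ico (2 * N - t) (2 * N + 1), Y (geodesic N Y s) (s - geodesic N Y s) := by
  induction t with
  | zero =>
    rw [Nat.sub_zero]
    obtain ⟨h1, h2, h3⟩ := geodesic_bounds N Y (le_refl (2 * N))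
    rw [passageFrom_eq Y (by omega) (by omega), passageFrom_of_le_left _ _ (by omega),
      passageFrom_of_le_right _ _ (by omega)]
    simp
  | succ t ih =>
    specialize ih (by omega)
    obtain ⟨s, hs⟩ : ∃ s, 2 * N - t = s + 1 := ⟨2 * N - t - 1, by omega⟩
    rw [hs] at ih
    rw [show 2 * N - (t + 1) = s by omega, Finset.sum_eq_sum_Ico_succ_bot (by omega),
      add_comm (Y _ _)]
    obtain ⟨h1, h2, h3⟩ := geodesic_bounds N Y (s := s) (by omega)
    rw [passageFrom_eq Y (by omega) (by omega)]
    refine Nat.add_le_add_right (le_trans ?_ ih) _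
    rw [geodesic]
    split_ifs with h
    · rw [show s + 1 - (geodesic N Y s + 1) = s - geodesic N Y s by omega]
      refine max_le le_rfl ?_
      rcases h.2 with h4 | h4
      · rw [passageFrom_of_le_right _ _ (by omega)]
        exact Nat.zero_le _
      · exact h4
    · rw [show s + 1 - geodesic N Y s = s - geodesic N Y s + 1 by omega]
      refine max_le ?_ le_rfl
      rw [not_and_or, not_or] at h
      rcases h with h4 | h4
      · rw [passageFrom_of_le_left _ _ (by omega)]
        exact Nat.zero_le _
      · exact (not_le.1 h4.2).le

theorem trueCount_geodesic (N : ℕ) (Y : ℕ → ℕ → ℕ) {s : ℕ} (hs : s ≤ 2 * N) :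
    trueCount (fun i : Fin (2 * N) =>
      decide (geodesic N Y ((i : ℕ) + 1) = geodesic N Y i + 1)) s = geodesic N Y s := by
  induction s with
  | zero => simp [trueCount_zero, geodesic]
  | succ s ih =>
    rw [trueCount_succ, ih (by omega)]
    have hlt : s < 2 * N := by omega
    simp only [hlt, exists_true_left, decide_eq_true_eq]
    split_ifs with h
    · exact h.symm
    · rw [geodesic] at h ⊢
      split_ifs at h ⊢ with h2
      · exact absurd rfl h
      · rfl

theorem lastPassage_eq_rectPassage (n : ℕ) (hn : 0 < n) (x : Fin n → Fin n → ℕ)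
    (Y : ℕ → ℕ → ℕ) (hY : ∀ j i : Fin n, Y j i = x j i) :
    lastPassage n hn x = rectPassage n n Y := by
  obtain ⟨N, rfl⟩ : ∃ N, n = N + 1 := ⟨n - 1, by omega⟩
  have hsum : ∀ d : Fin (2 * N) → Bool, trueCount d (2 * N) = N →
      ∑ s ∈ range (2 * (N + 1) - 1),
        x (pathCell (N + 1) hn d s).1 (pathCell (N + 1) hn d s).2 =
      ∑ s ∈ Ico 0 (2 * N + 1), Y (trueCount d s) (s - trueCount d s) := by
    intro d hd
    rw [← Finset.range_eq_Ico, show 2 * (N + 1) - 1 = 2 * N + 1 by omega]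
    refine Finset.sum_congr rfl fun s hs => ?_
    obtain ⟨h1, h2⟩ := trueCount_bounds d hd (s := s) (by have := Finset.mem_range.1 hs; omega)
    rw [← hY]
    simp only [pathCell, Nat.add_sub_cancel]
    rw [min_eq_left h1, min_eq_left h2]
  have hfrom : rectPassage (N + 1) (N + 1) Y = passageFrom (N + 1) Y 0 0 := by
    simp [passageFrom]
  rw [hfrom]
  apply le_antisymm
  · refine Finset.sup_le fun d hd => ?_
    have hd' : trueCount d (2 * N) = N := (trueCount_self d).trans (Finset.mem_filter.1 hd).2
    refine (hsum d hd').le.trans ?_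
    have := sum_path_le_passageFrom N Y d hd' (2 * N + 1) le_rfl
    simpa [trueCount_zero] using this
  · set d : Fin (2 * N) → Bool := fun i =>
      decide (geodesic N Y ((i : ℕ) + 1) = geodesic N Y i + 1) with hdef
    have hd : trueCount d (2 * N) = N := by
      rw [hdef, trueCount_geodesic N Y le_rfl]
      have := geodesic_bounds N Y (le_refl (2 * N))
      omega
    have hle := passageFrom_geodesic_le_sum N Y (2 * N) le_rfl
    rw [Nat.sub_self] at hle
    refine le_trans (by simpa [geodesic] using hle) (le_trans (le_of_eq ?_)
      (Finset.le_sup (f := fun d : Fin (2 * N) → Bool => ∑ s ∈ range (2 * (N + 1) - 1),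
        x (pathCell (N + 1) hn d s).1 (pathCell (N + 1) hn d s).2) (b := d) ?_))
    · rw [hsum d hd]
      rw [← Finset.range_eq_Ico]
      refine Finset.sum_congr rfl fun s hs => ?_
      rw [trueCount_geodesic N Y (by have := Finset.mem_range.1 hs; omega)]
    · exact Finset.mem_filter.2 ⟨Finset.mem_univ _, (trueCount_self d).symm.trans hd⟩

/-- Extension of a finite sequence by zero. -/
def extendZero {n : ℕ} (ν : Fin n → ℕ) (i : ℕ) : ℕ := if h : i < n then ν ⟨i, h⟩ else 0

theorem extendZero_of_lt {n i : ℕ} (ν : Fin n → ℕ) (h : i < n) : extendZero ν i = ν ⟨i, h⟩ :=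
  dif_pos h

@[simp]
theorem extendZero_val {n : ℕ} (ν : Fin n → ℕ) (i : Fin n) : extendZero ν i = ν i :=
  dif_pos i.2

theorem extendZero_of_le {n i : ℕ} (ν : Fin n → ℕ) (h : n ≤ i) : extendZero ν i = 0 :=
  dif_neg (not_lt.2 h)

theorem extendZero_injective (n : ℕ) :
    Function.Injective (extendZero : (Fin n → ℕ) → ℕ → ℕ) := by
  intro ν ν' h
  funext i
  rw [← extendZero_val ν, h, extendZero_val]

theorem extendZero_restrict {n : ℕ} {μ : ℕ → ℕ} (h : ∀ i, n ≤ i → μ i = 0) :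
    extendZero (fun i : Fin n => μ i) = μ := by
  funext i
  rcases lt_or_ge i n with hi | hi
  · rw [extendZero_of_lt _ hi]
  · rw [extendZero_of_le _ hi, h i hi]

theorem seqSize_extendZero {n : ℕ} (ν : Fin n → ℕ) : seqSize (extendZero ν) = ∑ i, ν i := by
  rw [seqSize_eq_sum_range fun i => extendZero_of_le ν, Finset.sum_range]
  simp

theorem schurWeight_support {n : ℕ} {a : Fin n → ℝ≥0∞} {μ : ℕ → ℕ} (h : schurWeight a μ ≠ 0) :
    Antitone μ ∧ ∀ i, n ≤ i → μ i = 0 := by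
  induction n generalizing μ with
  | zero =>
    have : μ = 0 := by
      by_contra hc
      exact h (if_neg hc)
    subst this
    exact ⟨fun _ _ _ => le_rfl, fun _ _ => rfl⟩
  | succ n ih =>
    simp only [schurWeight, ne_eq, ENNReal.tsum_eq_zero, not_forall] at h
    obtain ⟨κ, hκ⟩ := h
    have hi := (interlace_of_stripWeight_ne_zero (left_ne_zero_of_mul hκ)).1
    have hz := (ih (right_ne_zero_of_mul hκ)).2
    refine ⟨antitone_nat_of_succ_le fun i => (hi i).2.trans (hi i).1, fun i hin => ?_⟩
    obtain ⟨j, rfl⟩ : ∃ j, i = j + 1 := ⟨i - 1, by omega⟩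
    exact Nat.le_zero.1 ((hi j).2.trans (hz j (by omega)).le)

theorem interlace_extendZero {n : ℕ} {κ : Fin n → ℕ} {ν : Fin (n + 1) → ℕ} :
    Interlace (extendZero κ) (extendZero ν) ↔
      κ ∈ Fintype.piFinset (fun i : Fin n => Icc (ν i.succ) (ν i.castSucc)) := by
  simp only [Fintype.mem_piFinset, Finset.mem_Icc]
  constructor
  · intro h i
    have h1 := h.1 i
    rw [extendZero_val] at h1
    rw [← extendZero_val ν, ← extendZero_val ν]
    exact ⟨h1.2, h1.1⟩
  · intro h
    refine ⟨fun i => ?_, n + 1, fun i => extendZero_of_le ν⟩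
    rcases lt_or_ge i n with hi | hi
    · rw [extendZero_of_lt κ hi, extendZero_of_lt ν (by omega), extendZero_of_lt ν (by omega)]
      exact ⟨(h ⟨i, hi⟩).2, (h ⟨i, hi⟩).1⟩
    · rw [extendZero_of_le κ hi, extendZero_of_le ν (by omega : n + 1 ≤ i + 1)]
      exact ⟨Nat.zero_le _, le_rfl⟩

theorem schurWeight_extendZero (n : ℕ) (a : Fin n → ℝ) (ha : ∀ i, 0 ≤ a i) (ν : Fin n → ℕ)
    (hν : ∀ i j : Fin n, i ≤ j → ν j ≤ ν i) :
    0 ≤ schur n ν a ∧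
      schurWeight (fun i => ENNReal.ofReal (a i)) (extendZero ν) =
        ENNReal.ofReal (schur n ν a) := by
  induction n with
  | zero =>
    have : extendZero ν = 0 := by
      funext i
      exact extendZero_of_le ν (Nat.zero_le i)
    simp [schurWeight, schur, this]
  | succ n ih =>
    have hanti : ∀ κ ∈ Fintype.piFinset (fun i : Fin n => Icc (ν i.succ) (ν i.castSucc)),
        ∀ i j : Fin n, i ≤ j → κ j ≤ κ i := by
      intro κ hκ i j hij
      simp only [Fintype.mem_piFinset, Finset.mem_Icc] at hκ
      rcases hij.eq_or_lt with rfl | hlt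
      · exact le_rfl
      · refine (hκ j).2.trans (le_trans (hν _ _ ?_) (hκ i).1)
        rw [Fin.le_def]
        simpa using hlt
    rw [schur_succ n ν (fun i => hν _ _ i.castSucc_lt_succ.le)]
    have hnn : ∀ κ ∈ Fintype.piFinset (fun i : Fin n => Icc (ν i.succ) (ν i.castSucc)),
        0 ≤ a 0 ^ (∑ i, (ν i.castSucc - κ i) + ν (Fin.last n)) *
          schur n κ (fun i => a i.succ) := fun κ hκ =>
      mul_nonneg (pow_nonneg (ha 0) _)
        (ih (fun i => a i.succ) (fun i => ha _) κ (hanti κ hκ)).1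
    refine ⟨Finset.sum_nonneg hnn, ?_⟩
    rw [ENNReal.ofReal_sum_of_nonneg hnn, schurWeight, ← (extendZero_injective n).tsum_eq,
      tsum_eq_sum (s := Fintype.piFinset (fun i : Fin n => Icc (ν i.succ) (ν i.castSucc)))]
    · refine Finset.sum_congr rfl fun κ hκ => ?_
      rw [(ih (fun i => a i.succ) (fun i => ha _) κ (hanti κ hκ)).2,
        ENNReal.ofReal_mul (pow_nonneg (ha 0) _), ENNReal.ofReal_pow (ha 0), stripWeight,
        if_pos (interlace_extendZero.2 hκ), seqSize_extendZero, seqSize_extendZero,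
        Fin.sum_univ_castSucc]
      congr 2
      simp only [Fintype.mem_piFinset, Finset.mem_Icc] at hκ
      rw [Finset.sum_tsub_distrib _ fun i _ => (hκ i).2]
      have := Finset.sum_le_sum fun i (_ : i ∈ Finset.univ) => (hκ i).2
      omega
    · intro κ hκ
      rw [stripWeight, if_neg (interlace_extendZero.not.2 hκ), zero_mul]
    · intro κ hκ
      exact ⟨_, extendZero_restrict (schurWeight_support (right_ne_zero_of_mul hκ)).2⟩

theorem ENNReal.tsum_pi_prod {α : Type*} {m : ℕ} (f : Fin m → α → ℝ≥0∞) :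
    ∑' x : Fin m → α, ∏ i, f i (x i) = ∏ i, ∑' y, f i y := by
  induction m with
  | zero =>
    rw [tsum_eq_single (default : Fin 0 → α) (fun x hx => absurd (Subsingleton.elim _ _) hx)]
    simp
  | succ m ih =>
    rw [tsum_fin_succ, Fin.prod_univ_succ, ← ih, ← ENNReal.tsum_mul_right]
    refine tsum_congr fun y => ?_
    rw [← ENNReal.tsum_mul_left]
    refine tsum_congr fun x => ?_
    simp [Fin.prod_univ_succ]

theorem tsum_ofReal_weight_mul (n : ℕ) (hn : 0 < n) (a b : Fin n → ℝ) (ha : ∀ i, 0 ≤ a i)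
    (hb : ∀ j, 0 ≤ b j) (f : ℕ → ℝ≥0∞) :
    ∑' x : Fin n → Fin n → ℕ,
        ENNReal.ofReal (∏ i, ∏ j, (a i * b j) ^ x i j) * f (lastPassage n hn x) =
      ∑' ν : {ν : Fin n → ℕ // ∀ i j : Fin n, i ≤ j → ν j ≤ ν i},
        ENNReal.ofReal (schur n ν.1 a * schur n ν.1 b) * f (ν.1 ⟨0, hn⟩) := by
  have h := tsum_topShape_growth (fun j => ENNReal.ofReal (b j)) (fun i => ENNReal.ofReal (a i))
    (fun μ => f (μ 0))
  refine Eq.trans (tsum_congr fun x => ?_) (h.trans ?_)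
  · rw [topShape_growth_apply_zero x
      (fun i j => if h : i < n ∧ j < n then x ⟨i, h.1⟩ ⟨j, h.2⟩ else 0) (by simp),
      lastPassage_eq_rectPassage n hn x
      (fun i j => if h : i < n ∧ j < n then x ⟨i, h.1⟩ ⟨j, h.2⟩ else 0) (by simp)]
    congr 1
    rw [ENNReal.ofReal_prod_of_nonneg fun i _ => Finset.prod_nonneg fun j _ =>
      pow_nonneg (mul_nonneg (ha i) (hb j)) _]
    refine Finset.prod_congr rfl fun i _ => ?_
    rw [ENNReal.ofReal_prod_of_nonneg fun j _ => pow_nonneg (mul_nonneg (ha i) (hb j)) _]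
    refine Finset.prod_congr rfl fun j _ => ?_
    rw [ENNReal.ofReal_pow (mul_nonneg (ha i) (hb j)), ENNReal.ofReal_mul (ha i), mul_comm]
  · rw [← ((extendZero_injective n).comp Subtype.val_injective).tsum_eq
      (g := fun ν : {ν : Fin n → ℕ // ∀ i j : Fin n, i ≤ j → ν j ≤ ν i} => extendZero ν.1)]
    · refine tsum_congr fun ν => ?_
      obtain ⟨ha0, ha1⟩ := schurWeight_extendZero n a ha ν.1 ν.2
      rw [ha1, (schurWeight_extendZero n b hb ν.1 ν.2).2, ENNReal.ofReal_mul ha0,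
        extendZero_of_lt _ hn]
      ring
    · intro μ hμ
      obtain ⟨h1, h2⟩ := schurWeight_support (left_ne_zero_of_mul hμ)
      exact ⟨⟨fun i => μ i, fun i j hij => h1 hij⟩, extendZero_restrict h2⟩

theorem tsum_weight_subtype_of_pos (n l : ℕ) (hn : 0 < n) (a b : Fin n → ℝ)
    (ha : ∀ i, 0 ≤ a i) (hb : ∀ j, 0 ≤ b j) :
    ∑' x : {x : Fin n → Fin n → ℕ // lastPassage n hn x ≤ l},
        ∏ i, ∏ j, (a i * b j) ^ x.1 i j =
      ∑ μ ∈ (Finset.univ : Finset (Fin n → Fin (l + 1))).filter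
          (fun μ => ∀ i j : Fin n, i ≤ j → μ j ≤ μ i),
        schur n (fun i => (μ i : ℕ)) a * schur n (fun i => (μ i : ℕ)) b := by
  have hw : ∀ x : Fin n → Fin n → ℕ, 0 ≤ ∏ i, ∏ j, (a i * b j) ^ x i j := fun x =>
    Finset.prod_nonneg fun i _ => Finset.prod_nonneg fun j _ =>
      pow_nonneg (mul_nonneg (ha i) (hb j)) _
  have hs : ∀ ν : Fin n → ℕ, (∀ i j : Fin n, i ≤ j → ν j ≤ ν i) →
      0 ≤ schur n ν a * schur n ν b := fun ν hν =>
    mul_nonneg (schurWeight_extendZero n a ha ν hν).1 (schurWeight_extendZero n b hb ν hν).1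
  have h := tsum_ofReal_weight_mul n hn a b ha hb (fun k => if k ≤ l then 1 else 0)
  have hL : ∑' x : {x : Fin n → Fin n → ℕ // lastPassage n hn x ≤ l},
      ∏ i, ∏ j, (a i * b j) ^ x.1 i j =
      (∑' x : {x : Fin n → Fin n → ℕ // lastPassage n hn x ≤ l},
        ENNReal.ofReal (∏ i, ∏ j, (a i * b j) ^ x.1 i j)).toReal := by
    rw [ENNReal.tsum_toReal_eq fun _ => ENNReal.ofReal_ne_top]
    exact tsum_congr fun x => (ENNReal.toReal_ofReal (hw x.1)).symm
  have hs' : ∀ μ ∈ (Finset.univ : Finset (Fin n → Fin (l + 1))).filter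
      (fun μ => ∀ i j : Fin n, i ≤ j → μ j ≤ μ i),
      0 ≤ schur n (fun i => (μ i : ℕ)) a * schur n (fun i => (μ i : ℕ)) b := fun μ hμ =>
    hs _ fun i j hij => (Finset.mem_filter.1 hμ).2 i j hij
  rw [hL, ← ENNReal.toReal_ofReal (Finset.sum_nonneg hs')]
  congr 1
  refine Eq.trans ?_ (h.trans ?_)
  · refine (tsum_subtype {x | lastPassage n hn x ≤ l}
      (fun x => ENNReal.ofReal (∏ i, ∏ j, (a i * b j) ^ x i j))).trans (tsum_congr fun x => ?_)
    by_cases hx : lastPassage n hn x ≤ l <;> simp [Set.indicator, hx]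
  · rw [ENNReal.ofReal_sum_of_nonneg hs', ← Finset.sum_coe_sort,
      ← tsum_fintype (L := SummationFilter.unconditional _)]
    let g : {μ // μ ∈ (Finset.univ : Finset (Fin n → Fin (l + 1))).filter
        (fun μ => ∀ i j : Fin n, i ≤ j → μ j ≤ μ i)} →
        {ν : Fin n → ℕ // ∀ i j : Fin n, i ≤ j → ν j ≤ ν i} := fun μ =>
      ⟨fun i => (μ.1 i : ℕ), fun i j hij => (Finset.mem_filter.1 μ.2).2 i j hij⟩
    have hg : Function.Injective g := by
      intro μ μ' hμ
      ext i
      exact congrFun (congrArg Subtype.val hμ) i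
    rw [← hg.tsum_eq]
    · refine tsum_congr fun μ => ?_
      rw [if_pos (μ.1 ⟨0, hn⟩).is_le, mul_one]
    · intro ν hν
      have hl : ν.1 ⟨0, hn⟩ ≤ l := by
        by_contra hc
        exact hν (by simp [hc])
      refine ⟨⟨fun i => ⟨ν.1 i, ?_⟩, ?_⟩, rfl⟩
      · exact Nat.lt_succ_of_le ((ν.2 ⟨0, hn⟩ i (Fin.mk_le_of_le_val (Nat.zero_le _))).trans hl)
      · exact Finset.mem_filter.2 ⟨Finset.mem_univ _, fun i j hij => ν.2 i j hij⟩

theorem inv_prod_eq_tsum_schur_of_pos (n : ℕ) (hn : 0 < n) (a b : Fin n → ℝ)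
    (ha : ∀ i, 0 ≤ a i) (hb : ∀ j, 0 ≤ b j) (hab : ∀ i j, a i * b j < 1) :
    (∏ i, ∏ j, (1 - a i * b j))⁻¹ =
      ∑' μ : {μ : Fin n → ℕ // ∀ i j : Fin n, i ≤ j → μ j ≤ μ i},
        schur n μ.1 a * schur n μ.1 b := by
  have hs : ∀ ν : Fin n → ℕ, (∀ i j : Fin n, i ≤ j → ν j ≤ ν i) →
      0 ≤ schur n ν a * schur n ν b := fun ν hν =>
    mul_nonneg (schurWeight_extendZero n a ha ν hν).1 (schurWeight_extendZero n b hb ν hν).1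
  have h := tsum_ofReal_weight_mul n hn a b ha hb (fun _ => 1)
  simp only [mul_one] at h
  have hR : ∑' μ : {μ : Fin n → ℕ // ∀ i j : Fin n, i ≤ j → μ j ≤ μ i},
      schur n μ.1 a * schur n μ.1 b =
      (∑' μ : {μ : Fin n → ℕ // ∀ i j : Fin n, i ≤ j → μ j ≤ μ i},
        ENNReal.ofReal (schur n μ.1 a * schur n μ.1 b)).toReal := by
    rw [ENNReal.tsum_toReal_eq fun _ => ENNReal.ofReal_ne_top]
    exact tsum_congr fun x => (ENNReal.toReal_ofReal (hs x.1 x.2)).symm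
  rw [hR, ← h]
  have hw : ∀ x : Fin n → Fin n → ℕ, ENNReal.ofReal (∏ i, ∏ j, (a i * b j) ^ x i j) =
      ∏ i, ∏ j, ENNReal.ofReal (a i * b j) ^ x i j := by
    intro x
    rw [ENNReal.ofReal_prod_of_nonneg fun i _ => Finset.prod_nonneg fun j _ =>
      pow_nonneg (mul_nonneg (ha i) (hb j)) _]
    refine Finset.prod_congr rfl fun i _ => ?_
    rw [ENNReal.ofReal_prod_of_nonneg fun j _ => pow_nonneg (mul_nonneg (ha i) (hb j)) _]
    refine Finset.prod_congr rfl fun j _ => ?_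
    rw [ENNReal.ofReal_pow (mul_nonneg (ha i) (hb j))]
  rw [tsum_congr hw, ENNReal.tsum_pi_prod
    (fun i (y : Fin n → ℕ) => ∏ j, ENNReal.ofReal (a i * b j) ^ y j), ENNReal.toReal_prod,
    ← Finset.prod_inv_distrib]
  refine Finset.prod_congr rfl fun i _ => ?_
  rw [ENNReal.tsum_pi_prod (fun j k => ENNReal.ofReal (a i * b j) ^ k), ENNReal.toReal_prod,
    ← Finset.prod_inv_distrib]
  refine Finset.prod_congr rfl fun j _ => ?_
  rw [ENNReal.tsum_geometric, ENNReal.toReal_inv, ← ENNReal.ofReal_one,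
    ← ENNReal.ofReal_sub _ (mul_nonneg (ha i) (hb j)),
    ENNReal.toReal_ofReal (sub_nonneg.2 (hab i j).le)]

theorem hpoly_neg {R : Type*} [CommRing R] (n k : ℕ) (x : Fin n → R) :
    hpoly n k (-x) = (-1) ^ k * hpoly n k x := by
  unfold hpoly
  rw [Finset.mul_sum]
  refine Finset.sum_congr rfl fun d hd => ?_
  rw [← Finset.Nat.mem_antidiagonalTuple.1 hd, ← Finset.prod_pow_eq_pow_sum,
    ← Finset.prod_mul_distrib]
  refine Finset.prod_congr rfl fun i _ => ?_
  rw [Pi.neg_apply, neg_pow]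

theorem schur_neg {R : Type*} [CommRing R] (n : ℕ) (μ : Fin n → ℕ) (x : Fin n → R) :
    schur n μ (-x) =
      (∏ i : Fin n, (-1) ^ (μ i + i)) * ((∏ j : Fin n, (-1) ^ (j : ℕ)) * schur n μ x) := by
  unfold schur
  rw [← Matrix.det_mul_row, ← Matrix.det_mul_column]
  congr 1
  ext i j
  simp only [Matrix.of_apply]
  rcases lt_or_ge ((μ i : ℤ) - ((i : ℕ) : ℤ) + ((j : ℕ) : ℤ)) 0 with h | h
  · simp [hpolyZ_of_neg _ _ h]
  · obtain ⟨k, hk⟩ := Int.eq_ofNat_of_zero_le h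
    rw [hk, hpolyZ_natCast, hpolyZ_natCast, hpoly_neg, ← mul_assoc, ← pow_add]
    congr 1
    rw [show μ i + i + j = k + 2 * i by omega, pow_add, pow_mul]
    simp

theorem schur_neg_mul_schur_neg {R : Type*} [CommRing R] (n : ℕ) (μ : Fin n → ℕ)
    (x y : Fin n → R) :
    schur n μ (-x) * schur n μ (-y) = schur n μ x * schur n μ y := by
  have h1 : (∏ i : Fin n, (-1 : R) ^ (μ i + i)) * (∏ i : Fin n, (-1) ^ (μ i + i)) = 1 := by
    rw [← Finset.prod_mul_distrib]
    refine Finset.prod_eq_one fun i _ => ?_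
    rw [← mul_pow]
    simp
  have h2 : (∏ i : Fin n, (-1 : R) ^ (i : ℕ)) * (∏ i : Fin n, (-1) ^ (i : ℕ)) = 1 := by
    rw [← Finset.prod_mul_distrib]
    refine Finset.prod_eq_one fun i _ => ?_
    rw [← mul_pow]
    simp
  rw [schur_neg, schur_neg]
  linear_combination ((∏ i : Fin n, (-1 : R) ^ (i : ℕ)) * (∏ i : Fin n, (-1) ^ (i : ℕ)) *
    schur n μ x * schur n μ y) * h1 + schur n μ x * schur n μ y * h2

theorem johansson_lpp_prob_of_pos (n l : ℕ) (hn : 0 < n) (a b : Fin n → ℝ)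
    (ha : ∀ i, 0 ≤ a i) (hb : ∀ j, 0 ≤ b j) (hab : ∀ i j, a i * b j < 1) :
    ((∑' x : {x : Fin n → Fin n → ℕ // lastPassage n hn x ≤ l},
        ∏ i, ∏ j, (1 - a i * b j) * (a i * b j) ^ (x.1 i j)) =
      (∏ i, ∏ j, (1 - a i * b j)) *
        ∑ μ ∈ (Finset.univ : Finset (Fin n → Fin (l + 1))).filter
            (fun μ => ∀ i j : Fin n, i ≤ j → μ j ≤ μ i),
          schur n (fun i => (μ i : ℕ)) a * schur n (fun i => (μ i : ℕ)) b) ∧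
    (∏ i, ∏ j, (1 - a i * b j))⁻¹ =
      ∑' μ : {μ : Fin n → ℕ // ∀ i j : Fin n, i ≤ j → μ j ≤ μ i},
        schur n μ.1 a * schur n μ.1 b := by
  refine ⟨?_, inv_prod_eq_tsum_schur_of_pos n hn a b ha hb hab⟩
  rw [← tsum_weight_subtype_of_pos n l hn a b ha hb, ← tsum_mul_left]
  simp only [Finset.prod_mul_distrib]

/-- in the Johansson model with geometric weights,
`Pr(L_n^□ ≤ l) = ∏_{i,j} (1 - a_i b_j) · Σ_{μ : μ_1 ≤ l} s_μ(a) s_μ(b)`; moreover the Cauchy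
identity `∏_{i,j} (1 - a_i b_j)^{-1} = Σ_μ s_μ(a) s_μ(b)` normalizes the measure. -/
theorem johansson_lpp_prob (n l : ℕ) (hn : 0 < n) (a b : Fin n → ℝ)
    (hab : ∀ i j, 0 < a i * b j ∧ a i * b j < 1) :
    ((∑' x : {x : Fin n → Fin n → ℕ // lastPassage n hn x ≤ l},
        ∏ i, ∏ j, (1 - a i * b j) * (a i * b j) ^ (x.1 i j)) =
      (∏ i, ∏ j, (1 - a i * b j)) *
        ∑ μ ∈ (Finset.univ : Finset (Fin n → Fin (l + 1))).filter
            (fun μ => ∀ i j : Fin n, i ≤ j → μ j ≤ μ i),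
          schur n (fun i => (μ i : ℕ)) a * schur n (fun i => (μ i : ℕ)) b) ∧
    (∏ i, ∏ j, (1 - a i * b j))⁻¹ =
      ∑' μ : {μ : Fin n → ℕ // ∀ i j : Fin n, i ≤ j → μ j ≤ μ i},
        schur n μ.1 a * schur n μ.1 b := by
  have i₀ : Fin n := ⟨0, hn⟩
  rcases lt_trichotomy (a i₀) 0 with h | h | h
  · have hb : ∀ j, b j < 0 := fun j => neg_of_mul_pos_right (hab i₀ j).1 h.le
    have ha : ∀ i, a i < 0 := fun i => neg_of_mul_pos_left (hab i i₀).1 (hb i₀).le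
    have key := johansson_lpp_prob_of_pos n l hn (-a) (-b) (fun i => (neg_pos.2 (ha i)).le)
      (fun j => (neg_pos.2 (hb j)).le) (fun i j => by simpa using (hab i j).2)
    simpa only [Pi.neg_apply, neg_mul_neg, schur_neg_mul_schur_neg] using key
  · have := (hab i₀ i₀).1
    rw [h, zero_mul] at this
    exact absurd this (lt_irrefl 0)
  · have hb : ∀ j, 0 < b j := fun j => pos_of_mul_pos_right (hab i₀ j).1 h.le
    have ha : ∀ i, 0 < a i := fun i => pos_of_mul_pos_left (hab i i₀).1 (hb i₀).le
    exact johansson_lpp_prob_of_pos n l hn a b (fun i => (ha i).le) (fun j => (hb j).le)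
      fun i j => (hab i j).2
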